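/- Let n ≥ 4, let 2 ≤ r ≤ n/2, let 0 ≤ c ≤ 1/5, let α ∈ [0,1] and let δ be a real number with α + δ ∈ [0,1] and α - ((n-r)/r)·δ ∈ [0,1]. If |δ| ≤ 2c·(r/n)·α(1-α)·θ_n^(r), then c·(1 - r/n)·(α+δ)(1-α-δ)·θ_{n-1}^(r) + c·(r/n)·(α - ((n-r)/r)δ)·(1 - α + ((n-r)/r)δ)·θ_{n-1}^(r-1) ≥ c·α(1-α)·θ_n^(r). -/

import Mathlib

/-!
Write `a = r`, `b = n - r`, `p = a / (a + b)`, `q = b / (a + b)` and `δ = p ε`. The points at which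
`x (1 - x)` is evaluated become `α + p ε` and `α - q ε`, and the claim is symmetric in `a` and `b`.
With `T = θ(a, b)`, `A = θ(a, b - 1)`, `B = θ(a - 1, b)`, the difference of the two sides, divided
by `c`, is `α (1 - α) (q A + p B - T)`, minus a term linear in `ε` that involves only `B - A`, minus
a term quadratic in `ε`. The linear term costs at most half of the first one because `p T` and `q T`
are at most `3 / 4`. The quadratic term is at most `α (1 - α) T / (6 (a + b))` because
`p q T² = 1 / (a + b)`, while `q A + p B - T` is at least `2 T / (5 (a + b))`.
-/

/-- The symmetric form of the paper's `θ_m^(k)`: for `0 < k < m`, `θ_m^(k) = theta k (m - k)`. -/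
noncomputable def theta (a b : ℝ) : ℝ := √(1 / a + 1 / b)

namespace theta

variable {a b : ℝ}

lemma comm (a b : ℝ) : theta a b = theta b a := by
  rw [theta, theta, add_comm]

lemma eq_sqrt_div (ha : 0 < a) (hb : 0 < b) : theta a b = √((a + b) / (a * b)) := by
  rw [theta]
  congr 1
  field_simp
  ring

lemma nonneg (a b : ℝ) : 0 ≤ theta a b :=
  Real.sqrt_nonneg _

lemma pos (ha : 0 < a) (hb : 0 < b) : 0 < theta a b :=
  Real.sqrt_pos.mpr (by positivity)

lemma sq_eq (ha : 0 < a) (hb : 0 < b) : theta a b ^ 2 = 1 / a + 1 / b :=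
  Real.sq_sqrt (by positivity)

lemma sq_mul_weights (ha : 0 < a) (hb : 0 < b) :
    theta a b ^ 2 * (a / (a + b) * (b / (a + b))) = 1 / (a + b) := by
  rw [sq_eq ha hb]
  field_simp
  ring

lemma le_sub_one_left (ha : 1 < a) (b : ℝ) : theta a b ≤ theta (a - 1) b := by
  unfold theta
  gcongr
  linarith

lemma sub_one_left_le (ha : 2 ≤ a) (hb : 0 < b) : theta (a - 1) b ≤ 3 / 2 * theta a b := by
  have ha' : 0 < a - 1 := by linarith
  have one_div_sub_one_le : 1 / (a - 1) ≤ 2 * (1 / a) := by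
    rw [mul_one_div, div_le_div_iff₀ ha' (by linarith)]
    linarith
  have : 0 < 1 / a := by positivity
  have : 0 < 1 / b := by positivity
  refine Real.sqrt_le_iff.mpr ⟨mul_nonneg (by norm_num) (nonneg a b), ?_⟩
  rw [mul_pow, sq_eq (by linarith) hb]
  linarith

lemma two_div_le_mul_sub_one_left_sub (ha : 2 ≤ a) (hb : 0 < b) :
    2 / (5 * a ^ 2) ≤ theta a b * (theta (a - 1) b - theta a b) := by
  have ha' : 0 < a - 1 := by linarith
  have inv_sq_le : 1 / a ^ 2 ≤ theta (a - 1) b ^ 2 - theta a b ^ 2 := by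
    rw [sq_eq ha' hb, sq_eq (by linarith) hb]
    calc 1 / a ^ 2 ≤ 1 / (a * (a - 1)) := by gcongr; nlinarith
      _ = 1 / (a - 1) + 1 / b - (1 / a + 1 / b) := by field_simp; ring
  have sum_le : theta (a - 1) b + theta a b ≤ 5 / 2 * theta a b := by
    linarith [sub_one_left_le ha hb]
  have diff_nonneg : 0 ≤ theta (a - 1) b - theta a b :=
    sub_nonneg.mpr (le_sub_one_left (by linarith) b)
  calc 2 / (5 * a ^ 2) = 2 / 5 * (1 / a ^ 2) := by ring
    _ ≤ 2 / 5 * ((theta (a - 1) b + theta a b) * (theta (a - 1) b - theta a b)) := by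
        rw [← sq_sub_sq]; gcongr
    _ ≤ 2 / 5 * (5 / 2 * theta a b * (theta (a - 1) b - theta a b)) := by gcongr
    _ = theta a b * (theta (a - 1) b - theta a b) := by ring

lemma weight_mul_le (ha : 2 ≤ a) (hb : 0 < b) : b / (a + b) * theta a b ≤ 3 / 4 := by
  have sq_le : (b / (a + b) * theta a b) ^ 2 ≤ (3 / 4) ^ 2 := by
    calc (b / (a + b) * theta a b) ^ 2 = b / (a + b) * (1 / a) := by
          rw [mul_pow, sq_eq (by linarith) hb]; field_simp; ring
      _ ≤ 1 * (1 / 2) := by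
          gcongr
          exact div_le_one_of_le₀ (by linarith) (by linarith)
      _ ≤ (3 / 4) ^ 2 := by norm_num
  exact le_of_sq_le_sq sq_le (by norm_num)

/-- The gain `q A + p B - T` of the weighted mean of `A = θ(a, b - 1)` and `B = θ(a - 1, b)`, with
weights `q = b / (a + b)` and `p = a / (a + b)`, over `T = θ(a, b)`. -/
noncomputable def gain (a b : ℝ) : ℝ :=
  b / (a + b) * (theta a (b - 1) - theta a b) + a / (a + b) * (theta (a - 1) b - theta a b)

lemma two_fifths_mul_div_le_gain (ha : 2 ≤ a) (hb : 2 ≤ b) :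
    2 / 5 * (theta a b / (a + b)) ≤ gain a b := by
  have ha₀ : 0 < a := by linarith
  have hb₀ : 0 < b := by linarith
  have left_step := two_div_le_mul_sub_one_left_sub ha hb₀
  have right_step := two_div_le_mul_sub_one_left_sub hb ha₀
  rw [comm b a, comm (b - 1) a] at right_step
  refine le_of_mul_le_mul_left ?_ (pos ha₀ hb₀)
  calc theta a b * (2 / 5 * (theta a b / (a + b))) = 2 / 5 * theta a b ^ 2 / (a + b) := by ring
    _ = b / (a + b) * (2 / (5 * b ^ 2)) + a / (a + b) * (2 / (5 * a ^ 2)) := by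
        rw [sq_eq ha₀ hb₀]; field_simp; ring
    _ ≤ b / (a + b) * (theta a b * (theta a (b - 1) - theta a b))
          + a / (a + b) * (theta a b * (theta (a - 1) b - theta a b)) := by gcongr
    _ = theta a b * gain a b := by rw [gain]; ring

lemma mul_weights_mul_abs_sub_le_gain (ha : 2 ≤ a) (hb : 2 ≤ b) :
    theta a b * (a / (a + b) * (b / (a + b)) * |theta (a - 1) b - theta a (b - 1)|)
      ≤ 3 / 4 * gain a b := by
  have ha₀ : 0 < a := by linarith
  have hb₀ : 0 < b := by linarith
  have left_nonneg : 0 ≤ theta (a - 1) b - theta a b :=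
    sub_nonneg.mpr (le_sub_one_left (by linarith) b)
  have right_nonneg : 0 ≤ theta a (b - 1) - theta a b := by
    rw [comm a, comm a, sub_nonneg]
    exact le_sub_one_left (by linarith) a
  have abs_le_add : |theta (a - 1) b - theta a (b - 1)|
      ≤ (theta (a - 1) b - theta a b) + (theta a (b - 1) - theta a b) :=
    abs_le.mpr ⟨by linarith, by linarith⟩
  have q_mul_le : b / (a + b) * theta a b ≤ 3 / 4 := weight_mul_le ha hb₀
  have p_mul_le : a / (a + b) * theta a b ≤ 3 / 4 := by
    rw [comm, add_comm]
    exact weight_mul_le hb ha₀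
  have := pos ha₀ hb₀
  calc theta a b * (a / (a + b) * (b / (a + b)) * |theta (a - 1) b - theta a (b - 1)|)
      ≤ theta a b * (a / (a + b) * (b / (a + b))
          * ((theta (a - 1) b - theta a b) + (theta a (b - 1) - theta a b))) := by gcongr
    _ = (b / (a + b) * theta a b) * (a / (a + b) * (theta (a - 1) b - theta a b))
          + (a / (a + b) * theta a b) * (b / (a + b) * (theta a (b - 1) - theta a b)) := by ring
    _ ≤ 3 / 4 * (a / (a + b) * (theta (a - 1) b - theta a b))
          + 3 / 4 * (b / (a + b) * (theta a (b - 1) - theta a b)) := by gcongr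
    _ = 3 / 4 * gain a b := by rw [gain]; ring

lemma weighted_mean_le (ha : 2 ≤ a) (hb : 2 ≤ b) :
    a / (a + b) * theta a (b - 1) + b / (a + b) * theta (a - 1) b ≤ 3 / 2 * theta a b := by
  have ha₀ : 0 < a := by linarith
  have hb₀ : 0 < b := by linarith
  have left_le := sub_one_left_le ha hb₀
  have right_le := sub_one_left_le hb ha₀
  rw [comm (b - 1), comm b] at right_le
  calc a / (a + b) * theta a (b - 1) + b / (a + b) * theta (a - 1) b
      ≤ a / (a + b) * (3 / 2 * theta a b) + b / (a + b) * (3 / 2 * theta a b) := by gcongr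
    _ = 3 / 2 * theta a b := by field_simp

section Perturbation

variable {α ε : ℝ}

lemma linear_term_le (ha : 2 ≤ a) (hb : 2 ≤ b) (hα : α ∈ Set.Icc (0 : ℝ) 1)
    (hε : |ε| ≤ 2 / 3 * (α * (1 - α)) * theta a b) :
    ε * (1 - 2 * α) * (a / (a + b) * (b / (a + b)) * (theta (a - 1) b - theta a (b - 1)))
      ≤ 1 / 2 * (α * (1 - α)) * gain a b := by
  have ha₀ : 0 < a := by linarith
  have hb₀ : 0 < b := by linarith
  have var_nonneg : 0 ≤ α * (1 - α) := mul_nonneg hα.1 (sub_nonneg.mpr hα.2)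
  have slope_le_one : |1 - 2 * α| ≤ 1 := abs_le.mpr ⟨by linarith [hα.2], by linarith [hα.1]⟩
  have := pos ha₀ hb₀
  set pq := a / (a + b) * (b / (a + b))
  have pq_nonneg : 0 ≤ pq := by positivity
  calc ε * (1 - 2 * α) * (pq * (theta (a - 1) b - theta a (b - 1)))
      ≤ |ε| * |1 - 2 * α| * (pq * |theta (a - 1) b - theta a (b - 1)|) := by
        refine (le_abs_self _).trans_eq ?_
        rw [abs_mul, abs_mul, abs_mul, abs_of_nonneg pq_nonneg]
    _ ≤ 2 / 3 * (α * (1 - α)) * theta a b * 1 * (pq * |theta (a - 1) b - theta a (b - 1)|) := by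
        gcongr
    _ = 2 / 3 * (α * (1 - α)) * (theta a b * (pq * |theta (a - 1) b - theta a (b - 1)|)) := by ring
    _ ≤ 2 / 3 * (α * (1 - α)) * (3 / 4 * gain a b) := by
        exact mul_le_mul_of_nonneg_left (mul_weights_mul_abs_sub_le_gain ha hb) (by positivity)
    _ = 1 / 2 * (α * (1 - α)) * gain a b := by ring

lemma quadratic_term_le (ha : 2 ≤ a) (hb : 2 ≤ b) (hα : α ∈ Set.Icc (0 : ℝ) 1)
    (hε : |ε| ≤ 2 / 3 * (α * (1 - α)) * theta a b) :
    ε ^ 2 * (a / (a + b) * (b / (a + b)))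
        * (a / (a + b) * theta a (b - 1) + b / (a + b) * theta (a - 1) b)
      ≤ 1 / 6 * (α * (1 - α)) * (theta a b / (a + b)) := by
  have ha₀ : 0 < a := by linarith
  have hb₀ : 0 < b := by linarith
  have var_nonneg : 0 ≤ α * (1 - α) := mul_nonneg hα.1 (sub_nonneg.mpr hα.2)
  have var_le : α * (1 - α) ≤ 1 / 4 := by nlinarith [sq_nonneg (1 - 2 * α)]
  have := pos ha₀ hb₀
  have weighted_mean_nonneg :
      0 ≤ a / (a + b) * theta a (b - 1) + b / (a + b) * theta (a - 1) b :=
    add_nonneg (mul_nonneg (by positivity) (nonneg _ _)) (mul_nonneg (by positivity) (nonneg _ _))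
  have sq_le : ε ^ 2 ≤ (2 / 3 * (α * (1 - α)) * theta a b) ^ 2 :=
    sq_le_sq' (neg_le_of_abs_le hε) (le_of_abs_le hε)
  calc ε ^ 2 * (a / (a + b) * (b / (a + b)))
          * (a / (a + b) * theta a (b - 1) + b / (a + b) * theta (a - 1) b)
      ≤ (2 / 3 * (α * (1 - α)) * theta a b) ^ 2 * (a / (a + b) * (b / (a + b)))
          * (3 / 2 * theta a b) := by
        gcongr
        exact weighted_mean_le ha hb
    _ = 2 / 3 * (α * (1 - α)) ^ 2 * theta a b
          * (theta a b ^ 2 * (a / (a + b) * (b / (a + b)))) := by ring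
    _ = 2 / 3 * (α * (1 - α)) * (α * (1 - α)) * (theta a b / (a + b)) := by
        rw [sq_mul_weights ha₀ hb₀]; ring
    _ ≤ 2 / 3 * (α * (1 - α)) * (1 / 4) * (theta a b / (a + b)) := by gcongr
    _ = 1 / 6 * (α * (1 - α)) * (theta a b / (a + b)) := by ring

theorem mul_le_weighted_mean (ha : 2 ≤ a) (hb : 2 ≤ b) (hα : α ∈ Set.Icc (0 : ℝ) 1)
    (hε : |ε| ≤ 2 / 3 * (α * (1 - α)) * theta a b) :
    α * (1 - α) * theta a b ≤
      b / (a + b) * ((α + a / (a + b) * ε) * (1 - (α + a / (a + b) * ε))) * theta a (b - 1)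
        + a / (a + b) * ((α - b / (a + b) * ε) * (1 - (α - b / (a + b) * ε)))
          * theta (a - 1) b := by
  have var_nonneg : 0 ≤ α * (1 - α) := mul_nonneg hα.1 (sub_nonneg.mpr hα.2)
  have theta_div_nonneg : 0 ≤ α * (1 - α) * (theta a b / (a + b)) :=
    mul_nonneg var_nonneg (div_nonneg (nonneg a b) (by linarith))
  have linear_le := linear_term_le ha hb hα hε
  have quadratic_le := quadratic_term_le ha hb hα hε
  have gain_ge := mul_le_mul_of_nonneg_left (two_fifths_mul_div_le_gain ha hb) var_nonneg
  have weights_add : b / (a + b) = 1 - a / (a + b) := by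
    have : a + b ≠ 0 := by linarith
    field_simp
    ring
  have expansion :
      b / (a + b) * ((α + a / (a + b) * ε) * (1 - (α + a / (a + b) * ε))) * theta a (b - 1)
        + a / (a + b) * ((α - b / (a + b) * ε) * (1 - (α - b / (a + b) * ε))) * theta (a - 1) b
        - α * (1 - α) * theta a b
      = α * (1 - α) * gain a b
        - ε * (1 - 2 * α) * (a / (a + b) * (b / (a + b)) * (theta (a - 1) b - theta a (b - 1)))
        - ε ^ 2 * (a / (a + b) * (b / (a + b)))
          * (a / (a + b) * theta a (b - 1) + b / (a + b) * theta (a - 1) b) := by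
    rw [gain, weights_add]
    ring
  linarith

end Perturbation

end theta

theorem stmt_6_general (n r : ℝ) (hr : 2 ≤ r) (hrn : r + 2 ≤ n)
    (c α δ : ℝ) (hc0 : 0 ≤ c) (hc : c ≤ 1 / 3) (hα : α ∈ Set.Icc (0 : ℝ) 1)
    (hδ : |δ| ≤ 2 * c * (r / n) * (α * (1 - α)) * √(n / (r * (n - r)))) :
    c * (1 - r / n) * ((α + δ) * (1 - α - δ)) * √((n - 1) / (r * (n - 1 - r)))
      + c * (r / n) * ((α - (n - r) / r * δ) * (1 - α + (n - r) / r * δ))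
        * √((n - 1) / ((r - 1) * (n - r)))
      ≥ c * (α * (1 - α)) * √(n / (r * (n - r))) := by
  have hr₀ : 0 < r := by linarith
  have hn₀ : 0 < n := by linarith
  have theta_n : √(n / (r * (n - r))) = theta r (n - r) := by
    rw [theta.eq_sqrt_div hr₀ (by linarith), add_sub_cancel]
  have theta_r : √((n - 1) / (r * (n - 1 - r))) = theta r (n - r - 1) := by
    rw [theta.eq_sqrt_div hr₀ (by linarith)]; ring_nf
  have theta_r_sub_one : √((n - 1) / ((r - 1) * (n - r))) = theta (r - 1) (n - r) := by
    rw [theta.eq_sqrt_div (by linarith) (by linarith)]; ring_nf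
  rw [theta_n] at hδ
  rw [theta_n, theta_r, theta_r_sub_one]
  have hε : |n / r * δ| ≤ 2 / 3 * (α * (1 - α)) * theta r (n - r) := by
    have : 0 ≤ α * (1 - α) * theta r (n - r) :=
      mul_nonneg (mul_nonneg hα.1 (sub_nonneg.mpr hα.2)) (theta.nonneg _ _)
    calc |n / r * δ| = n / r * |δ| := by rw [abs_mul, abs_of_pos (by positivity)]
      _ ≤ n / r * (2 * c * (r / n) * (α * (1 - α)) * theta r (n - r)) := by gcongr
      _ = 2 * c * (α * (1 - α) * theta r (n - r)) := by field_simp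
      _ ≤ 2 * (1 / 3) * (α * (1 - α) * theta r (n - r)) := by gcongr
      _ = 2 / 3 * (α * (1 - α)) * theta r (n - r) := by ring
  have balanced := theta.mul_le_weighted_mean hr (by linarith) hα hε
  rw [add_sub_cancel] at balanced
  have p_mul : r / n * (n / r * δ) = δ := by field_simp
  have q_mul : (n - r) / n * (n / r * δ) = (n - r) / r * δ := by field_simp
  have q_eq : (n - r) / n = 1 - r / n := by field_simp
  rw [p_mul, q_mul, q_eq] at balanced
  linarith [mul_le_mul_of_nonneg_left balanced hc0]

/-- Claim 3.4 of the paper: if `|δ| ≤ 2c·(r/n)·α(1-α)·θ_n^(r)`, then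
`c·(1-r/n)·(α+δ)(1-α-δ)·θ_{n-1}^(r) + c·(r/n)·(α-((n-r)/r)δ)(1-α+((n-r)/r)δ)·θ_{n-1}^(r-1)
  ≥ c·α(1-α)·θ_n^(r)`, where `θ_m^(k) = √(m/(k(m-k)))`. -/
theorem stmt_6 (n r : ℕ) (hn : 4 ≤ n) (hr2 : 2 ≤ r) (hrn : 2 * r ≤ n)
    (c α δ : ℝ) (hc0 : 0 ≤ c) (hc : c ≤ 1 / 5)
    (hα : α ∈ Set.Icc (0 : ℝ) 1) (hαδ : α + δ ∈ Set.Icc (0 : ℝ) 1)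
    (hαδ' : α - (((n : ℝ) - r) / r) * δ ∈ Set.Icc (0 : ℝ) 1)
    (hδ : |δ| ≤ 2 * c * ((r : ℝ) / n) * (α * (1 - α))
        * Real.sqrt ((n : ℝ) / ((r : ℝ) * ((n : ℝ) - r)))) :
    c * (1 - (r : ℝ) / n) * ((α + δ) * (1 - α - δ))
        * Real.sqrt (((n : ℝ) - 1) / ((r : ℝ) * ((n : ℝ) - 1 - r)))
      + c * ((r : ℝ) / n) * ((α - (((n : ℝ) - r) / r) * δ) * (1 - α + (((n : ℝ) - r) / r) * δ))
        * Real.sqrt (((n : ℝ) - 1) / (((r : ℝ) - 1) * ((n : ℝ) - r)))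
      ≥ c * (α * (1 - α)) * Real.sqrt ((n : ℝ) / ((r : ℝ) * ((n : ℝ) - r))) := by
  exact stmt_6_general n r (mod_cast hr2) (mod_cast (by omega : r + 2 ≤ n)) c α δ hc0
    (by linarith) hα hδ
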